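/- (Faber's incidence formula) Let q be a prime power and let K ⊆ 𝔽_q² be a union of q+1 lines L_s, one for each slope s ∈ PG(1,q). Then #K = q(q+1)/2 + Σ_{x ∈ K} C(μ_x − 1, 2), where μ_x is the number of the lines L_s passing through x and C(n,2) = n(n−1)/2. -/

import Mathlib

open Finset

/-- The line in `F × F` through `p` with (finite) slope `s`. -/
def lineF {F : Type*} [Field F] [Fintype F] [DecidableEq F] (s : F) (p : F × F) :
    Finset (F × F) :=
  Finset.univ.filter fun x => x.2 = p.2 + s * (x.1 - p.1)

/-- The vertical line in `F × F` with first coordinate `c`. -/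
def vertF {F : Type*} [Field F] [Fintype F] [DecidableEq F] (c : F) : Finset (F × F) :=
  Finset.univ.filter fun x => x.1 = c

/-- The line through `p` with slope `s ∈ PG(1,q) = F ∪ {∞}` (`none` = vertical). -/
def lineO {F : Type*} [Field F] [Fintype F] [DecidableEq F] (s : Option F) (p : F × F) :
    Finset (F × F) :=
  match s with
  | some a => lineF a p
  | none => vertF p.1

section

variable {F : Type*} [Field F] [Fintype F] [DecidableEq F]

theorem card_lineO (s : Option F) (p : F × F) : #(lineO s p) = Fintype.card F := by
  rw [← Finset.card_univ]
  cases s with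
  | none =>
    refine Finset.card_nbij' Prod.snd (fun y => (p.1, y)) ?_ ?_ ?_ ?_ <;>
      simp +contextual [lineO, vertF, Set.MapsTo, Set.LeftInvOn, Set.RightInvOn]
  | some a =>
    refine Finset.card_nbij' Prod.fst (fun x => (x, p.2 + a * (x - p.1))) ?_ ?_ ?_ ?_ <;>
      simp +contextual [lineO, lineF, Set.MapsTo, Set.LeftInvOn, Set.RightInvOn]

theorem card_vertF_inter_lineF (a c : F) (p : F × F) : #(vertF c ∩ lineF a p) = 1 := by
  refine Finset.card_eq_one.2 ⟨(c, p.2 + a * (c - p.1)), ?_⟩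
  ext ⟨x, y⟩
  simp only [vertF, lineF, mem_inter, mem_filter_univ, mem_singleton, Prod.mk.injEq]
  refine and_congr_right fun hx => ?_
  rw [hx]

theorem card_lineF_inter_lineF {a b : F} (hab : a ≠ b) (p r : F × F) :
    #(lineF a p ∩ lineF b r) = 1 := by
  have hab' : a - b ≠ 0 := sub_ne_zero.2 hab
  let x₀ := (r.2 - p.2 + a * p.1 - b * r.1) / (a - b)
  have hx₀ : x₀ * (a - b) = r.2 - p.2 + a * p.1 - b * r.1 := div_mul_cancel₀ _ hab'
  refine Finset.card_eq_one.2 ⟨(x₀, p.2 + a * (x₀ - p.1)), ?_⟩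
  ext ⟨x, y⟩
  simp only [lineF, mem_inter, mem_filter_univ, mem_singleton, Prod.mk.injEq]
  constructor
  · rintro ⟨h₁, h₂⟩
    have hx : x = x₀ := mul_right_cancel₀ hab' (by linear_combination h₂ - h₁ - hx₀)
    exact ⟨hx, hx ▸ h₁⟩
  · rintro ⟨rfl, rfl⟩
    exact ⟨rfl, by linear_combination hx₀⟩

theorem card_lineO_inter_lineO {s t : Option F} (hst : s ≠ t) (p r : F × F) :
    #(lineO s p ∩ lineO t r) = 1 := by
  match s, t with
  | none, none => exact absurd rfl hst
  | none, some b => exact card_vertF_inter_lineF b p.1 r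
  | some a, none => rw [inter_comm]; exact card_vertF_inter_lineF a r.1 p
  | some a, some b => exact card_lineF_inter_lineF (fun h => hst (congrArg some h)) p r

end

section

variable {ι α : Type*} [Fintype ι] [DecidableEq α]

theorem sum_biUnion_card_filter_mem (L : ι → Finset α) :
    ∑ x ∈ univ.biUnion L, #{s | x ∈ L s} = ∑ s, #(L s) := by
  refine (sum_card_bipartiteAbove_eq_sum_card_bipartiteBelow fun x s => x ∈ L s).trans
    (sum_congr rfl fun s _ => congrArg card ?_)
  ext x
  simp only [bipartiteBelow, mem_filter, mem_biUnion, mem_univ, true_and, and_iff_right_iff_imp]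
  exact fun h => ⟨s, h⟩

theorem sum_biUnion_card_filter_mem_sq (L : ι → Finset α) :
    ∑ x ∈ univ.biUnion L, #{s | x ∈ L s} ^ 2 = ∑ s, ∑ t, #(L s ∩ L t) := by
  rw [← Fintype.sum_prod_type']
  calc
    _ = ∑ x ∈ univ.biUnion L, #{st : ι × ι | x ∈ L st.1 ∧ x ∈ L st.2} :=
      sum_congr rfl fun x _ => by
        rw [← univ_product_univ, filter_product (fun s => x ∈ L s) (fun t => x ∈ L t),
          card_product, sq]
    _ = _ := by
      refine (sum_card_bipartiteAbove_eq_sum_card_bipartiteBelow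
        fun x (st : ι × ι) => x ∈ L st.1 ∧ x ∈ L st.2).trans
        (sum_congr rfl fun st _ => congrArg card ?_)
      ext x
      simp only [bipartiteBelow, mem_filter, mem_biUnion, mem_univ, true_and, mem_inter,
        and_iff_right_iff_imp]
      exact fun h => ⟨st.1, h.1⟩

end

theorem two_mul_choose_pred_two_add {m : ℕ} (hm : 1 ≤ m) :
    2 * (m - 1).choose 2 + 3 * m = m ^ 2 + 2 := by
  obtain ⟨n, rfl⟩ := Nat.exists_eq_add_of_le' hm
  rw [Nat.add_sub_cancel, Nat.choose_two_right,
    Nat.mul_div_cancel' (Nat.even_mul_pred_self n).two_dvd]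
  cases n with
  | zero => rfl
  | succ k => rw [Nat.add_sub_cancel]; ring

/-- Faber's incidence formula:
#K = q(q+1)/2 + Σ_{x ∈ K} C(μ_x − 1, 2). -/
theorem faber_incidence_formula {F : Type*} [Field F] [Fintype F] [DecidableEq F]
    (L : Option F → Finset (F × F))
    (hL : ∀ s : Option F, ∃ p : F × F, L s = lineO s p) :
    ((Finset.univ : Finset (Option F)).biUnion L).card
      = Fintype.card F * (Fintype.card F + 1) / 2 +
        ∑ x ∈ (Finset.univ : Finset (Option F)).biUnion L,
          Nat.choose (((Finset.univ : Finset (Option F)).filter fun s => x ∈ L s).card - 1) 2 := by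
  choose p hp using hL
  have hcard (s : Option F) : #(L s) = Fintype.card F := by rw [hp, card_lineO]
  have hinter (s : Option F) : ∑ t, #(L s ∩ L t) = 2 * Fintype.card F := by
    rw [← add_sum_erase _ _ (mem_univ s), inter_self, hcard,
      sum_congr rfl fun t ht => by
        rw [hp s, hp t, card_lineO_inter_lineO (ne_of_mem_erase ht).symm],
      sum_const, card_erase_of_mem (mem_univ s), card_univ, Fintype.card_option]
    simp [two_mul]
  have h₁ := sum_biUnion_card_filter_mem L
  have h₂ := sum_biUnion_card_filter_mem_sq L
  simp only [hcard, hinter, sum_const, card_univ, Fintype.card_option, smul_eq_mul] at h₁ h₂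
  have h₃ := sum_congr (rfl : univ.biUnion L = _) fun x hx =>
    two_mul_choose_pred_two_add (m := #{s | x ∈ L s}) <| by
      obtain ⟨s, -, hs⟩ := mem_biUnion.1 hx
      exact card_pos.2 ⟨s, by simpa using hs⟩
  rw [sum_add_distrib, sum_add_distrib, ← mul_sum, ← mul_sum, h₁, h₂, sum_const,
    smul_eq_mul] at h₃
  have h₄ := Nat.div_mul_cancel (Nat.even_mul_succ_self (Fintype.card F)).two_dvd
  linarith
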